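/- Let λ ≥ 1 and let ξ₁, ξ₂ be real numbers with |ξ₁| ≥ 100, |ξ₂| ≥ 100, and set ξ = ξ₁ + ξ₂. If |ξ| ≥ 1, then |3 ξ ξ₁ ξ₂ − (ξ₁² + ξ₁ξ₂ + ξ₂²)/(λ⁴ ξ ξ₁ ξ₂)| ≥ |ξ ξ₁ ξ₂| / 4. -/

import Mathlib

/-!
With `P = ξ ξ₁ ξ₂` and `ξ = ξ₁ + ξ₂`, the numerator of the fraction is the symmetric expression
`(ξ² + ξ₁² + ξ₂²) / 2`. When all three frequencies have size at least `1`, each of these squares is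
at most `P²`, so the fraction is at most `(3 / 2) |P|` and cannot cancel more than half of the
term `3 P`.
-/

section LinearOrderedField

variable {K : Type*} [Field K] [LinearOrder K] [IsStrictOrderedRing K]

theorem sq_le_mul_sq_of_one_le_abs {a b : K} (ha : 1 ≤ |a|) : b ^ 2 ≤ (a * b) ^ 2 := by
  rw [mul_pow]
  exact le_mul_of_one_le_left (sq_nonneg b) ((one_le_sq_iff_one_le_abs a).2 ha)

theorem sum_sq_le_three_mul_prod_sq {a b c : K} (ha : 1 ≤ |a|) (hb : 1 ≤ |b|) (hc : 1 ≤ |c|) :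
    a ^ 2 + b ^ 2 + c ^ 2 ≤ 3 * (a * b * c) ^ 2 := by
  have one_le_abs_mul {x y : K} (hx : 1 ≤ |x|) (hy : 1 ≤ |y|) : 1 ≤ |x * y| := by
    rw [abs_mul]
    exact one_le_mul_of_one_le_of_one_le hx hy
  have a_sq_le : a ^ 2 ≤ (b * c * a) ^ 2 := sq_le_mul_sq_of_one_le_abs (one_le_abs_mul hb hc)
  have b_sq_le : b ^ 2 ≤ (a * c * b) ^ 2 := sq_le_mul_sq_of_one_le_abs (one_le_abs_mul ha hc)
  have c_sq_le : c ^ 2 ≤ (a * b * c) ^ 2 := sq_le_mul_sq_of_one_le_abs (one_le_abs_mul ha hb)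
  linarith

theorem abs_div_mul_le_of_abs_le_mul_sq {k q x μ : K} (hμ : 1 ≤ |μ|) (hq : |q| ≤ k * x ^ 2) :
    |q / (μ * x)| ≤ k * |x| := by
  rcases eq_or_ne x 0 with rfl | hx
  · simp
  have x_pos : 0 < |x| := abs_pos.2 hx
  calc |q / (μ * x)| = |q| / (|μ| * |x|) := by rw [abs_div, abs_mul]
    _ ≤ |q| / |x| :=
        div_le_div_of_nonneg_left (abs_nonneg q) x_pos (le_mul_of_one_le_left x_pos.le hμ)
    _ ≤ k * |x| := by
        rwa [div_le_iff₀ x_pos, mul_assoc, abs_mul_abs_self, ← sq]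

theorem sub_mul_abs_le_abs_mul_sub_div {a k q x μ : K} (hμ : 1 ≤ |μ|) (hq : |q| ≤ k * x ^ 2) :
    (a - k) * |x| ≤ |a * x - q / (μ * x)| := by
  calc (a - k) * |x| = a * |x| - k * |x| := sub_mul a k |x|
    _ ≤ |a * x| - |q / (μ * x)| := by
        refine sub_le_sub ?_ (abs_div_mul_le_of_abs_le_mul_sq hμ hq)
        rw [abs_mul]
        exact mul_le_mul_of_nonneg_right (le_abs_self a) (abs_nonneg x)
    _ ≤ |a * x - q / (μ * x)| := abs_sub_abs_le_abs_sub _ _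

/- The coefficient `μ` plays the role of `λ⁴`; its sign is free, so both signs of the dispersion are
covered. -/
theorem ostrovsky_resonance_lower_bound_general {μ ξ ξ₁ ξ₂ : K} (hμ : 1 ≤ |μ|)
    (hξ₁ : 1 ≤ |ξ₁|) (hξ₂ : 1 ≤ |ξ₂|) (hξsum : ξ = ξ₁ + ξ₂) (hξ : 1 ≤ |ξ|) :
    3 / 2 * |ξ * ξ₁ * ξ₂|
      ≤ |3 * ξ * ξ₁ * ξ₂ - (ξ₁ ^ 2 + ξ₁ * ξ₂ + ξ₂ ^ 2) / (μ * ξ * ξ₁ * ξ₂)| := by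
  have numerator_eq : ξ₁ ^ 2 + ξ₁ * ξ₂ + ξ₂ ^ 2 = (ξ ^ 2 + ξ₁ ^ 2 + ξ₂ ^ 2) / 2 := by
    rw [hξsum]
    ring
  have numerator_le : |ξ₁ ^ 2 + ξ₁ * ξ₂ + ξ₂ ^ 2| ≤ 3 / 2 * (ξ * ξ₁ * ξ₂) ^ 2 := by
    rw [numerator_eq, abs_of_nonneg (by positivity)]
    linarith [sum_sq_le_three_mul_prod_sq hξ hξ₁ hξ₂]
  convert sub_mul_abs_le_abs_mul_sub_div (a := 3) hμ numerator_le using 1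
  · norm_num
  · simp only [mul_assoc]

end LinearOrderedField

/-- Lower bound on the resonance function of the Ostrovsky equation with positive
dispersion, for two large input frequencies and an output frequency of size at least 1. -/
theorem ostrovsky_resonance_lower_bound (lam ξ ξ₁ ξ₂ : ℝ)
    (hlam : 1 ≤ lam) (hξ₁ : 100 ≤ |ξ₁|) (hξ₂ : 100 ≤ |ξ₂|)
    (hξsum : ξ = ξ₁ + ξ₂) (hξ : 1 ≤ |ξ|) :
    |ξ * ξ₁ * ξ₂| / 4
      ≤ |3 * ξ * ξ₁ * ξ₂ - (ξ₁ ^ 2 + ξ₁ * ξ₂ + ξ₂ ^ 2) / (lam ^ 4 * ξ * ξ₁ * ξ₂)| := by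
  have one_le_abs_pow : 1 ≤ |lam ^ 4| := (one_le_pow₀ hlam).trans (le_abs_self _)
  linarith [abs_nonneg (ξ * ξ₁ * ξ₂), ostrovsky_resonance_lower_bound_general one_le_abs_pow
    (by linarith : 1 ≤ |ξ₁|) (by linarith : 1 ≤ |ξ₂|) hξsum hξ]
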